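/- For r ≥ 0 define dist(ω*, r) = sup{ max(‖ω − ω*‖_∞, |I − I*|) : ω ∈ ℝ_{≥0}^K, I ∈ ℝ, and there exists η ∈ [−r, r]^K with Ψ(ω, I, η) = 0 }. Then: (1) dist(ω*, 0) = 0; (2) r ↦ dist(ω*, r) is non-decreasing; (3) lim_{r→0+} dist(ω*, r) = 0. -/

import Mathlib

open scoped BigOperators

/-- A single-parameter exponential family, given by the log-partition function `b`,
smooth with positive second derivative on an open interval `Θ`, together with the
inverse `θof` of `b'` on the set of means `S = b'(Θ)`. -/
structure SPEF where
  Θ : Set ℝ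
  Θ_isOpen : IsOpen Θ
  Θ_ordConnected : Set.OrdConnected Θ
  Θ_nonempty : Θ.Nonempty
  b : ℝ → ℝ
  b_smooth : ContDiffOn ℝ (⊤ : ℕ∞) b Θ
  b_conv : ∀ t ∈ Θ, 0 < iteratedDeriv 2 b t
  θof : ℝ → ℝ
  θof_mem : ∀ μ ∈ deriv b '' Θ, θof μ ∈ Θ
  θof_spec : ∀ μ ∈ deriv b '' Θ, deriv b (θof μ) = μ

namespace SPEF

/-- The set of means of the family. -/
def S (F : SPEF) : Set ℝ := deriv F.b '' F.Θ

/-- KL divergence `d(μ, x)` between the members of the family with means `μ` and `x`. -/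
noncomputable def d (F : SPEF) (μ x : ℝ) : ℝ :=
  (F.θof μ - F.θof x) * μ - F.b (F.θof μ) + F.b (F.θof x)

end SPEF

/-- A `K`-armed bandit instance with arm distributions in a fixed SPEF; arm `0`
(the paper's arm `1`) is the unique best arm. -/
structure Bandit (K : ℕ) [NeZero K] extends SPEF where
  two_le : 2 ≤ K
  μ : Fin K → ℝ
  μ_mem : ∀ a, μ a ∈ SPEF.S toSPEF
  μ_best : ∀ a : Fin K, a ≠ 0 → μ a < μ 0

namespace Bandit

variable {K : ℕ} [NeZero K]

/-- KL divergence of the underlying family. -/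
noncomputable def d (M : Bandit K) : ℝ → ℝ → ℝ := M.toSPEF.d

/-- The weighted mean `x_{1,a}(N₁, N_a)`. -/
noncomputable def x1 (M : Bandit K) (a : Fin K) (N1 Na : ℝ) : ℝ :=
  (N1 * M.μ 0 + Na * M.μ a) / (N1 + Na)

/-- The index `W_a(N₁, N_a)` of an arm `a ≠ 1`. -/
noncomputable def W (M : Bandit K) (a : Fin K) (N1 Na : ℝ) : ℝ :=
  N1 * M.d (M.μ 0) (M.x1 a N1 Na) + Na * M.d (M.μ a) (M.x1 a N1 Na)

/-- The set `{2, …, K}` of suboptimal arms. -/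
def alt (K : ℕ) [NeZero K] : Finset (Fin K) := Finset.univ.filter (fun a => a ≠ 0)

/-- The anchor function `g(μ, N)`. -/
noncomputable def g (M : Bandit K) (Nv : Fin K → ℝ) : ℝ :=
  (∑ a ∈ alt K, M.d (M.μ 0) (M.x1 a (Nv 0) (Nv a)) / M.d (M.μ a) (M.x1 a (Nv 0) (Nv a))) - 1

end Bandit

open Bandit

/-- The perturbed optimality system `Ψ(ω, I, η) = 0`: the anchor equation perturbed by
`η 0`, the index equations perturbed by `η a`, and the simplex constraint. -/
def PsiZero {K : ℕ} [NeZero K] (M : Bandit K) (ω : Fin K → ℝ) (I : ℝ)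
    (η : Fin K → ℝ) : Prop :=
  M.g ω - η 0 = 0 ∧ (∀ a ∈ alt K, M.W a (ω 0) (ω a) - I - η a = 0) ∧
    (∑ a, ω a) - 1 = 0

/-- The maximal distance `dist(ω*, r)` from `(ω*, I*)` of solutions of the perturbed
system with perturbations of size at most `r`. -/
noncomputable def distFn {K : ℕ} [NeZero K] (M : Bandit K)
    (ωstar : Fin K → ℝ) (Istar : ℝ) (r : ℝ) : ℝ :=
  sSup {v : ℝ | ∃ (ω : Fin K → ℝ) (I : ℝ) (η : Fin K → ℝ),
    (∀ a, 0 ≤ ω a) ∧ (∀ a, |η a| ≤ r) ∧ PsiZero M ω I η ∧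
    v = max ‖ω - ωstar‖ |I - Istar|}

/-!
Eliminating `η`, the solutions with perturbations of size at most `r` form a bounded set that
increases with `r`, so monotonicity is immediate. For the limit, these sets lie eventually in any
neighbourhood of the exact solutions: away from the exact solutions, compactness of the simplex
leaves only finitely many local problems. Near a point with `ω 0 > 0` the system is continuous, so a
nonzero residual stays nonzero; near the face `ω 0 = 0` the anchor function blows up. On the face
itself, where the paper's `g` is infinite, the convention `x / 0 = 0` makes `g` take finitely many
values, so an approximate solution has `g = 0` once `r` is small and solves the system with `I = 0`.
-/

open Filter Topology Metric

/-- The outer radius of `s` about `x`, that is, the supremum over `y ∈ s` of the distance from `y`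
to `x`. It measures how far a set of approximate solutions is from the exact one; as a real
supremum it takes the junk value `0` on unbounded sets. -/
noncomputable def outerRadius {X : Type*} [PseudoMetricSpace X] (x : X) (s : Set X) : ℝ :=
  sSup ((dist · x) '' s)

section OuterRadius

variable {X : Type*} [PseudoMetricSpace X] {x : X} {s t : Set X}

lemma outerRadius_nonneg (x : X) (s : Set X) : 0 ≤ outerRadius x s :=
  Real.sSup_nonneg (Set.forall_mem_image.2 fun _ _ => dist_nonneg)

lemma outerRadius_le {c : ℝ} (hc : 0 ≤ c) (h : s ⊆ closedBall x c) : outerRadius x s ≤ c :=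
  Real.sSup_le (Set.forall_mem_image.2 h) hc

@[simp]
lemma outerRadius_singleton (x : X) : outerRadius x {x} = 0 := by
  simp [outerRadius]

lemma outerRadius_mono (ht : Bornology.IsBounded t) (hst : s ⊆ t) :
    outerRadius x s ≤ outerRadius x t := by
  obtain ⟨c, hc⟩ := ht.subset_closedBall x
  have hbdd : BddAbove ((dist · x) '' t) := ⟨c, Set.forall_mem_image.2 hc⟩
  exact outerRadius_le (outerRadius_nonneg x t) fun y hy =>
    le_csSup hbdd (Set.mem_image_of_mem _ (hst hy))

lemma tendsto_outerRadius {ι : Type*} {l : Filter ι} {u : ι → Set X}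
    (h : ∀ ε > 0, ∀ᶠ i in l, u i ⊆ ball x ε) :
    Tendsto (fun i => outerRadius x (u i)) l (𝓝 0) := by
  refine Metric.tendsto_nhds.2 fun ε hε => ?_
  filter_upwards [h (ε / 2) (half_pos hε)] with i hi
  rw [Real.dist_0_eq_abs, abs_of_nonneg (outerRadius_nonneg x _)]
  exact (outerRadius_le (half_pos hε).le (hi.trans ball_subset_closedBall)).trans_lt
    (half_lt_self hε)

end OuterRadius

lemma eventually_abs_le_imp_eq_zero {T : Set ℝ} (hT : T.Finite) :
    ∀ᶠ r in 𝓝 (0 : ℝ), ∀ y ∈ T, |y| ≤ r → y = 0 := by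
  refine (eventually_all_finite hT).2 fun y _ => ?_
  rcases eq_or_ne y 0 with rfl | hy
  · exact Eventually.of_forall fun _ _ => rfl
  · filter_upwards [eventually_lt_nhds (abs_pos.2 hy)] with r hr hyr
    exact absurd hyr hr.not_ge

lemma eventually_lt_abs {X : Type*} [TopologicalSpace X] {f : X → ℝ} {x : X}
    (hf : ContinuousAt f x) (hx : f x ≠ 0) :
    ∀ᶠ z in 𝓝 ((0 : ℝ), x), z.1 < |f z.2| :=
  continuousAt_fst.eventually_lt (hf.abs.comp_of_eq continuousAt_snd rfl) (abs_pos.2 hx)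

namespace SPEF

variable (F : SPEF)

lemma contDiffAt_b {t : ℝ} (ht : t ∈ F.Θ) : ContDiffAt ℝ (⊤ : ℕ∞) F.b t :=
  F.b_smooth.contDiffAt (F.Θ_isOpen.mem_nhds ht)

lemma differentiableAt_b {t : ℝ} (ht : t ∈ F.Θ) : DifferentiableAt ℝ F.b t :=
  (F.contDiffAt_b ht).differentiableAt (by simp)

lemma hasStrictDerivAt_deriv_b {t : ℝ} (ht : t ∈ F.Θ) :
    HasStrictDerivAt (deriv F.b) (iteratedDeriv 2 F.b t) t := by
  have hC1 : ContDiffAt ℝ 1 (deriv F.b) t :=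
    (F.b_smooth.deriv_of_isOpen F.Θ_isOpen (by norm_cast)).contDiffAt (F.Θ_isOpen.mem_nhds ht)
  rw [iteratedDeriv_succ, iteratedDeriv_one]
  exact hC1.hasStrictDerivAt one_ne_zero

lemma strictConvexOn_b : StrictConvexOn ℝ F.Θ F.b :=
  strictConvexOn_of_deriv2_pos' F.Θ_ordConnected.convex F.b_smooth.continuousOn fun t ht => by
    simpa only [iteratedDeriv_eq_iterate] using F.b_conv t ht

lemma injOn_deriv_b : Set.InjOn (deriv F.b) F.Θ :=
  (F.strictConvexOn_b.strictMonoOn_deriv fun _ => F.differentiableAt_b).injOn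

lemma θof_deriv_b {t : ℝ} (ht : t ∈ F.Θ) : F.θof (deriv F.b t) = t :=
  F.injOn_deriv_b (F.θof_mem _ ⟨t, ht, rfl⟩) ht (F.θof_spec _ ⟨t, ht, rfl⟩)

lemma ordConnected_S : F.S.OrdConnected :=
  (F.Θ_ordConnected.isPreconnected.image _ fun _ ht =>
    (F.hasStrictDerivAt_deriv_b ht).hasDerivAt.continuousAt.continuousWithinAt).ordConnected

lemma continuousAt_θof {x : ℝ} (hx : x ∈ F.S) : ContinuousAt F.θof x := by
  obtain ⟨t, ht, rfl⟩ := hx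
  rw [ContinuousAt, F.θof_deriv_b ht,
    ← (F.hasStrictDerivAt_deriv_b ht).map_nhds_eq (F.b_conv t ht).ne', tendsto_map'_iff]
  refine tendsto_id.congr' ?_
  filter_upwards [F.Θ_isOpen.mem_nhds ht] with s hs using (F.θof_deriv_b hs).symm

lemma continuousAt_d (μ : ℝ) {x : ℝ} (hx : x ∈ F.S) : ContinuousAt (F.d μ) x := by
  have hθ := F.continuousAt_θof hx
  have hb : ContinuousAt (fun y => F.b (F.θof y)) x :=
    ContinuousAt.comp (F.contDiffAt_b (F.θof_mem x hx)).continuousAt hθ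
  exact (((continuousAt_const.sub hθ).mul continuousAt_const).sub continuousAt_const).add hb

@[simp]
lemma d_self (μ : ℝ) : F.d μ μ = 0 := by
  simp [d]

-- `d(b'(s), b'(t))` is the gap at `t` between `b` and its tangent line at `s`.
lemma d_pos {μ x : ℝ} (hμ : μ ∈ F.S) (hx : x ∈ F.S) (hne : μ ≠ x) : 0 < F.d μ x := by
  obtain ⟨s, hs, rfl⟩ := hμ
  obtain ⟨t, ht, rfl⟩ := hx
  have hst : s ≠ t := ne_of_apply_ne _ hne
  have hb := (F.differentiableAt_b hs).hasDerivAt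
  rw [d, F.θof_deriv_b hs, F.θof_deriv_b ht]
  rcases hst.lt_or_gt with h | h
  · have := F.strictConvexOn_b.lt_slope_of_hasDerivAt hs ht h hb
    rw [slope_def_field, lt_div_iff₀ (sub_pos.2 h)] at this
    linarith
  · have := F.strictConvexOn_b.slope_lt_of_hasDerivAt ht hs h hb
    rw [slope_def_field, div_lt_iff₀ (sub_pos.2 h)] at this
    linarith

lemma d_nonneg {μ x : ℝ} (hμ : μ ∈ F.S) (hx : x ∈ F.S) : 0 ≤ F.d μ x := by
  rcases eq_or_ne μ x with rfl | hne
  · exact (F.d_self μ).ge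
  · exact (F.d_pos hμ hx hne).le

lemma mul_d_add_mul_d {p q μ ν m : ℝ} (x : ℝ) (hm : p * μ + q * ν = (p + q) * m) :
    p * F.d μ x + q * F.d ν x = p * F.d μ m + q * F.d ν m + (p + q) * F.d m x := by
  simp only [d]
  linear_combination (F.θof m - F.θof x) * hm

end SPEF

namespace Bandit

variable {K : ℕ} [NeZero K] (M : Bandit K)

lemma mem_alt {a : Fin K} : a ∈ alt K ↔ a ≠ 0 := by
  simp [alt]

lemma exists_mem_alt (M : Bandit K) : ∃ a, a ∈ alt K :=
  ⟨⟨1, M.two_le⟩, mem_alt.2 fun h => by simpa using congrArg Fin.val h⟩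

section WeightedMean

variable {a : Fin K} {p q : ℝ}

lemma x1_mem_Icc (ha : a ∈ alt K) (hp : 0 ≤ p) (hq : 0 ≤ q) (hpq : 0 < p + q) :
    M.x1 a p q ∈ Set.Icc (M.μ a) (M.μ 0) := by
  have := M.μ_best a (mem_alt.1 ha)
  rw [x1, Set.mem_Icc, le_div_iff₀ hpq, div_le_iff₀ hpq]
  constructor <;> nlinarith

lemma lt_x1 (ha : a ∈ alt K) (hp : 0 < p) (hq : 0 ≤ q) : M.μ a < M.x1 a p q := by
  have := M.μ_best a (mem_alt.1 ha)
  rw [x1, lt_div_iff₀ (by positivity)]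
  nlinarith

lemma x1_mem_S (ha : a ∈ alt K) (hp : 0 ≤ p) (hq : 0 ≤ q) (hpq : 0 < p + q) :
    M.x1 a p q ∈ M.toSPEF.S :=
  M.toSPEF.ordConnected_S.out (M.μ_mem a) (M.μ_mem 0) (M.x1_mem_Icc ha hp hq hpq)

lemma x1_zero_left (a : Fin K) (hq : q ≠ 0) : M.x1 a 0 q = M.μ a := by
  simp [x1, hq]

lemma d_μ_zero_pos (ha : a ∈ alt K) : 0 < M.d (M.μ 0) (M.μ a) :=
  M.toSPEF.d_pos (M.μ_mem 0) (M.μ_mem a) (M.μ_best a (mem_alt.1 ha)).ne'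

lemma d_x1_nonneg (b : Fin K) (ha : a ∈ alt K) (hp : 0 ≤ p) (hq : 0 ≤ q) (hpq : 0 < p + q) :
    0 ≤ M.d (M.μ b) (M.x1 a p q) :=
  M.toSPEF.d_nonneg (M.μ_mem b) (M.x1_mem_S ha hp hq hpq)

lemma d_x1_pos (ha : a ∈ alt K) (hp : 0 < p) (hq : 0 ≤ q) : 0 < M.d (M.μ a) (M.x1 a p q) :=
  M.toSPEF.d_pos (M.μ_mem a) (M.x1_mem_S ha hp.le hq (by positivity)) (M.lt_x1 ha hp hq).ne

lemma W_nonneg (ha : a ∈ alt K) (hp : 0 ≤ p) (hq : 0 ≤ q) : 0 ≤ M.W a p q := by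
  rcases (add_nonneg hp hq).eq_or_lt' with hpq | hpq
  · obtain ⟨rfl, rfl⟩ := (add_eq_zero_iff_of_nonneg hp hq).1 hpq
    simp [W]
  · exact add_nonneg (mul_nonneg hp (M.d_x1_nonneg 0 ha hp hq hpq))
      (mul_nonneg hq (M.d_x1_nonneg a ha hp hq hpq))

-- `W_a(p, q)` is the minimum over `x` of `p d(μ₁, x) + q d(μ_a, x)`; compare with `x = μ_a`.
lemma W_le (ha : a ∈ alt K) (hp : 0 ≤ p) (hq : 0 ≤ q) :
    M.W a p q ≤ p * M.d (M.μ 0) (M.μ a) := by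
  rcases (add_nonneg hp hq).eq_or_lt' with hpq | hpq
  · obtain ⟨rfl, rfl⟩ := (add_eq_zero_iff_of_nonneg hp hq).1 hpq
    simp [W]
  · have hm : p * M.μ 0 + q * M.μ a = (p + q) * M.x1 a p q := (mul_div_cancel₀ _ hpq.ne').symm
    have hW := M.toSPEF.mul_d_add_mul_d (M.μ a) hm
    rw [SPEF.d_self, mul_zero, add_zero] at hW
    have hd := M.toSPEF.d_nonneg (M.x1_mem_S ha hp hq hpq) (M.μ_mem a)
    exact (le_add_of_nonneg_right (mul_nonneg hpq.le hd)).trans_eq hW.symm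

lemma W_zero_left (ha : a ∈ alt K) (hq : 0 ≤ q) : M.W a 0 q = 0 :=
  le_antisymm ((M.W_le ha le_rfl hq).trans_eq (zero_mul _)) (M.W_nonneg ha le_rfl hq)

end WeightedMean

section Allocation

variable {a : Fin K} {ω : Fin K → ℝ}

lemma continuousAt_d_x1 (μ : ℝ) (ha : a ∈ alt K) (h0 : 0 ≤ ω 0) (hωa : 0 ≤ ω a)
    (hpos : 0 < ω 0 + ω a) :
    ContinuousAt (fun ω : Fin K → ℝ => M.d μ (M.x1 a (ω 0) (ω a))) ω := by
  have hx1 : ContinuousAt (fun ω : Fin K → ℝ => M.x1 a (ω 0) (ω a)) ω :=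
    ContinuousAt.div (by fun_prop) (by fun_prop) hpos.ne'
  exact ContinuousAt.comp (M.toSPEF.continuousAt_d μ (M.x1_mem_S ha h0 hωa hpos)) hx1

lemma continuousAt_W (ha : a ∈ alt K) (h0 : 0 ≤ ω 0) (hωa : 0 ≤ ω a) (hpos : 0 < ω 0 + ω a) :
    ContinuousAt (fun ω : Fin K → ℝ => M.W a (ω 0) (ω a)) ω :=
  ((continuousAt_apply 0 ω).mul (M.continuousAt_d_x1 _ ha h0 hωa hpos)).add
    ((continuousAt_apply a ω).mul (M.continuousAt_d_x1 _ ha h0 hωa hpos))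

lemma continuousAt_g (hω : ∀ a, 0 ≤ ω a) (h0 : 0 < ω 0) : ContinuousAt M.g ω := by
  refine (tendsto_finsetSum _ fun a ha => ?_).sub_const 1
  have hpos := add_pos_of_pos_of_nonneg h0 (hω a)
  exact (M.continuousAt_d_x1 _ ha h0.le (hω a) hpos).div
    (M.continuousAt_d_x1 _ ha h0.le (hω a) hpos) (M.d_x1_pos ha h0 (hω a)).ne'

lemma div_sub_one_le_g (ha : a ∈ alt K) (hω : ∀ a, 0 ≤ ω a) (h0 : 0 < ω 0) :
    M.d (M.μ 0) (M.x1 a (ω 0) (ω a)) / M.d (M.μ a) (M.x1 a (ω 0) (ω a)) - 1 ≤ M.g ω := by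
  refine sub_le_sub_right (Finset.single_le_sum (f := fun c =>
    M.d (M.μ 0) (M.x1 c (ω 0) (ω c)) / M.d (M.μ c) (M.x1 c (ω 0) (ω c))) (fun c hc => ?_) ha) 1
  exact div_nonneg
    (M.d_x1_nonneg 0 hc h0.le (hω c) (add_pos_of_pos_of_nonneg h0 (hω c)))
    (M.d_x1_pos hc h0 (hω c)).le

lemma exists_mem_alt_pos (hω : ω ∈ stdSimplex ℝ (Fin K)) (h0 : ω 0 = 0) :
    ∃ a ∈ alt K, 0 < ω a := by
  obtain ⟨a, -, ha⟩ : ∃ a ∈ Finset.univ, ω a ≠ 0 :=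
    Finset.exists_ne_zero_of_sum_ne_zero (hω.2.trans_ne one_ne_zero)
  exact ⟨a, mem_alt.2 (by rintro rfl; exact ha h0), (hω.1 a).lt_of_ne' ha⟩

lemma tendsto_g_atTop (hω : ω ∈ stdSimplex ℝ (Fin K)) (h0 : ω 0 = 0) :
    Tendsto M.g (𝓝[{ω | (∀ a, 0 ≤ ω a) ∧ 0 < ω 0}] ω) atTop := by
  obtain ⟨a, ha, hωa⟩ := exists_mem_alt_pos hω h0
  have hlim (μ : ℝ) : Tendsto (fun ω : Fin K → ℝ => M.d μ (M.x1 a (ω 0) (ω a)))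
      (𝓝[{ω | (∀ a, 0 ≤ ω a) ∧ 0 < ω 0}] ω) (𝓝 (M.d μ (M.μ a))) := by
    have hcont := M.continuousAt_d_x1 μ ha h0.ge hωa.le (by simpa [h0] using hωa)
    rw [ContinuousAt, h0, M.x1_zero_left a hωa.ne'] at hcont
    exact hcont.mono_left nhdsWithin_le_nhds
  have hden : Tendsto (fun ω : Fin K → ℝ => M.d (M.μ a) (M.x1 a (ω 0) (ω a)))
      (𝓝[{ω | (∀ a, 0 ≤ ω a) ∧ 0 < ω 0}] ω) (𝓝[>] 0) :=
    tendsto_nhdsWithin_iff.2 ⟨(hlim (M.μ a)).trans_eq (by rw [d, SPEF.d_self]),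
      eventually_nhdsWithin_of_forall fun ω' h => M.d_x1_pos ha h.2 (h.1 a)⟩
  have hratio := (hlim (M.μ 0)).pos_mul_atTop (M.d_μ_zero_pos ha)
    (tendsto_inv_nhdsGT_zero.comp hden)
  exact tendsto_atTop_mono' _
    (eventually_nhdsWithin_of_forall fun ω' h => M.div_sub_one_le_g ha h.1 h.2)
    (tendsto_atTop_add_const_right _ (-1) hratio)

-- With the conventions `x / 0 = 0` and `x1 a 0 0 = 0`, the value of `g` on the face `ω 0 = 0` is
-- determined by the support of `ω`.
lemma finite_image_g_face : (M.g '' {ω | ω 0 = 0}).Finite := by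
  refine (Set.finite_range fun A : Set (Fin K) => M.g (A.indicator 1)).subset ?_
  rintro _ ⟨ω, h0, rfl⟩
  have h0 : ω 0 = 0 := h0
  have hx1 (a : Fin K) : M.x1 a ((Function.support ω).indicator 1 0)
      ((Function.support ω).indicator 1 a) = M.x1 a (ω 0) (ω a) := by
    by_cases ha : ω a = 0 <;> simp [x1, h0, ha]
  exact ⟨Function.support ω, by simp only [g, hx1]⟩

end Allocation

/-- The pairs `(ω, I)`, `ω` in the simplex, that solve the optimality system up to an error of at
most `r` in the anchor equation and in each index equation. For `r = 0` these are the exact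
solutions; the perturbation `η` of the paper is eliminated (see `mem_approxSol_iff`). -/
def approxSol (r : ℝ) : Set ((Fin K → ℝ) × ℝ) :=
  {z | z.1 ∈ stdSimplex ℝ (Fin K) ∧ |M.g z.1| ≤ r ∧
    ∀ a ∈ alt K, |M.W a (z.1 0) (z.1 a) - z.2| ≤ r}

lemma mem_approxSol_iff {r : ℝ} {z : (Fin K → ℝ) × ℝ} :
    z ∈ M.approxSol r ↔
      (∀ a, 0 ≤ z.1 a) ∧ ∃ η : Fin K → ℝ, (∀ a, |η a| ≤ r) ∧ PsiZero M z.1 z.2 η := by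
  constructor
  · rintro ⟨⟨hω, hsum⟩, hg, hW⟩
    refine ⟨hω, fun a => if a = 0 then M.g z.1 else M.W a (z.1 0) (z.1 a) - z.2, fun a => ?_,
      by simp, fun a ha => by simp [mem_alt.1 ha], sub_eq_zero.2 hsum⟩
    dsimp only
    split_ifs with ha
    · exact hg
    · exact hW a (mem_alt.2 ha)
  · rintro ⟨hω, η, hη, hg, hW, hsum⟩
    refine ⟨⟨hω, sub_eq_zero.1 hsum⟩, ?_, fun a ha => ?_⟩
    · rw [sub_eq_zero.1 hg]
      exact hη 0
    · rw [sub_eq_zero.1 (hW a ha)]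
      exact hη a

lemma mem_approxSol_zero_iff {z : (Fin K → ℝ) × ℝ} :
    z ∈ M.approxSol 0 ↔ (∀ a, 0 ≤ z.1 a) ∧ PsiZero M z.1 z.2 (fun _ => 0) := by
  simp only [mem_approxSol_iff, abs_nonpos_iff, ← funext_iff (g := fun _ : Fin K => (0 : ℝ)),
    exists_eq_left]

lemma approxSol_mono : Monotone M.approxSol := fun _ _ hrs _ hz =>
  ⟨hz.1, hz.2.1.trans hrs, fun a ha => (hz.2.2 a ha).trans hrs⟩

lemma exists_approxSol_subset_prod :
    ∃ B, ∀ r, M.approxSol r ⊆ stdSimplex ℝ (Fin K) ×ˢ closedBall 0 (B + r) := by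
  obtain ⟨a, ha⟩ := M.exists_mem_alt
  refine ⟨M.d (M.μ 0) (M.μ a), fun r z ⟨hω, _, hW⟩ => ⟨hω, ?_⟩⟩
  have hW0 := M.W_nonneg ha (hω.1 0) (hω.1 a)
  have hW1 : M.W a (z.1 0) (z.1 a) ≤ M.d (M.μ 0) (M.μ a) :=
    (M.W_le ha (hω.1 0) (hω.1 a)).trans <| mul_le_of_le_one_left (M.d_μ_zero_pos ha).le
      (mem_Icc_of_mem_stdSimplex hω 0).2
  have hWI := abs_le.1 (hW a ha)
  rw [mem_closedBall, Real.dist_0_eq_abs, abs_le]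
  constructor <;> linarith

lemma isBounded_approxSol (r : ℝ) : Bornology.IsBounded (M.approxSol r) :=
  let ⟨_, hB⟩ := M.exists_approxSol_subset_prod
  ((isCompact_stdSimplex ℝ (Fin K)).isBounded.prod isBounded_closedBall).subset (hB r)

section Stability

variable {z : (Fin K → ℝ) × ℝ}

lemma eventually_notMem_approxSol (hω : z.1 ∈ stdSimplex ℝ (Fin K)) (h0 : 0 < z.1 0)
    (hz : z ∉ M.approxSol 0) : ∀ᶠ y in 𝓝 ((0 : ℝ), z), y.2 ∉ M.approxSol y.1 := by
  by_cases hg : M.g z.1 = 0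
  · obtain ⟨a, ha, hWa⟩ : ∃ a ∈ alt K, M.W a (z.1 0) (z.1 a) - z.2 ≠ 0 := by
      by_contra! hW
      exact hz ⟨hω, by simp [hg], fun a ha => by simp [hW a ha]⟩
    have hcont : ContinuousAt (fun z : (Fin K → ℝ) × ℝ => M.W a (z.1 0) (z.1 a) - z.2) z :=
      ((M.continuousAt_W ha h0.le (hω.1 a) (add_pos_of_pos_of_nonneg h0 (hω.1 a))).comp
        continuousAt_fst).sub continuousAt_snd
    filter_upwards [eventually_lt_abs hcont hWa] with y hy hmem
    exact hy.not_ge (hmem.2.2 a ha)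
  · have hcont : ContinuousAt (fun z : (Fin K → ℝ) × ℝ => M.g z.1) z :=
      (M.continuousAt_g hω.1 h0).comp continuousAt_fst
    filter_upwards [eventually_lt_abs hcont hg] with y hy hmem
    exact hy.not_ge hmem.2.1

lemma eventually_eq_zero_of_mem_approxSol (hω : z.1 ∈ stdSimplex ℝ (Fin K)) (h0 : z.1 0 = 0) :
    ∀ᶠ y in 𝓝 ((0 : ℝ), z), y.2 ∈ M.approxSol y.1 → y.2.1 0 = 0 := by
  have hg : ∀ᶠ ω in 𝓝 z.1, ((∀ a, 0 ≤ ω a) ∧ 0 < ω 0) → 1 < M.g ω :=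
    eventually_nhdsWithin_iff.1 ((M.tendsto_g_atTop hω h0).eventually_gt_atTop 1)
  filter_upwards [continuousAt_fst.eventually (eventually_lt_nhds one_pos),
    continuousAt_snd.fst.eventually hg] with y hr hgt hy
  by_contra hne
  have hpos := (hy.1.1 0).lt_of_ne' hne
  linarith [hgt ⟨hy.1.1, hpos⟩, (abs_le.1 hy.2.1).2]

lemma eventually_prodMk_zero_mem_approxSol :
    ∀ᶠ r in 𝓝 (0 : ℝ), ∀ y ∈ M.approxSol r, y.1 0 = 0 → (y.1, 0) ∈ M.approxSol 0 := by
  filter_upwards [eventually_abs_le_imp_eq_zero M.finite_image_g_face] with r hr y hy h0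
  have hg : M.g y.1 = 0 := hr _ ⟨y.1, h0, rfl⟩ hy.2.1
  exact ⟨hy.1, by simp [hg], fun a ha => by simp [h0, M.W_zero_left ha (hy.1.1 a)]⟩

theorem eventually_approxSol_subset_thickening {ε : ℝ} (hε : 0 < ε) :
    ∀ᶠ r in 𝓝 (0 : ℝ), M.approxSol r ⊆ thickening ε (M.approxSol 0) := by
  obtain ⟨B, hB⟩ := M.exists_approxSol_subset_prod
  have hcompact : IsCompact
      ((stdSimplex ℝ (Fin K) ×ˢ closedBall 0 (B + 1)) \ thickening ε (M.approxSol 0)) :=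
    ((isCompact_stdSimplex ℝ (Fin K)).prod (isCompact_closedBall 0 (B + 1))).diff
      isOpen_thickening
  have hfar := hcompact.eventually_forall_of_forall_eventually (x₀ := (0 : ℝ))
    (P := fun r y => y ∈ M.approxSol r → y.1 0 = 0) fun z ⟨⟨hω, _⟩, hz⟩ => by
      rcases (hω.1 0).eq_or_lt' with h0 | h0
      · exact M.eventually_eq_zero_of_mem_approxSol hω h0
      · have hz' : z ∉ M.approxSol 0 := fun h => hz (self_subset_thickening hε _ h)
        exact (M.eventually_notMem_approxSol hω h0 hz').mono fun _ hy hmem => (hy hmem).elim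
  filter_upwards [hfar, M.eventually_prodMk_zero_mem_approxSol, eventually_lt_nhds one_pos,
    eventually_lt_nhds hε] with r hfar hface hr1 hrε y hy
  by_contra hnear
  have hy1 : y ∈ stdSimplex ℝ (Fin K) ×ˢ closedBall 0 (B + 1) :=
    hB 1 (M.approxSol_mono hr1.le hy)
  have h0 : y.1 0 = 0 := hfar y ⟨hy1, hnear⟩ hy
  obtain ⟨a, ha⟩ := M.exists_mem_alt
  have hI : |y.2| ≤ r := by simpa [h0, M.W_zero_left ha (hy.1.1 a)] using hy.2.2 a ha
  refine hnear (mem_thickening_iff.2 ⟨(y.1, 0), hface y hy h0, ?_⟩)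
  simpa [Prod.dist_eq, hε] using hI.trans_lt hrε

end Stability

lemma distFn_eq_outerRadius (ωstar : Fin K → ℝ) (Istar r : ℝ) :
    distFn M ωstar Istar r = outerRadius (ωstar, Istar) (M.approxSol r) := by
  have hdist (z : (Fin K → ℝ) × ℝ) :
      dist z (ωstar, Istar) = max ‖z.1 - ωstar‖ |z.2 - Istar| := by
    rw [Prod.dist_eq, dist_eq_norm, Real.dist_eq]
  simp only [distFn, outerRadius, hdist]
  congr 1
  ext v
  constructor
  · rintro ⟨ω, I, η, hω, hη, hΨ, rfl⟩
    exact ⟨(ω, I), M.mem_approxSol_iff.2 ⟨hω, η, hη, hΨ⟩, rfl⟩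
  · rintro ⟨⟨ω, I⟩, hz, rfl⟩
    obtain ⟨hω, η, hη, hΨ⟩ := M.mem_approxSol_iff.1 hz
    exact ⟨ω, I, η, hω, hη, hΨ, rfl⟩

end Bandit

/-- Lemma B.6: properties of `r ↦ dist(ω*, r)`: it vanishes at `0`,
is non-decreasing, and tends to `0` as `r → 0⁺`. -/
theorem statement_13 {K : ℕ} [NeZero K] (M : Bandit K)
    (ωstar : Fin K → ℝ) (Istar : ℝ)
    (hstar_nonneg : ∀ a, 0 ≤ ωstar a)
    (hstar : PsiZero M ωstar Istar (fun _ => 0))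
    (hstar_uniq : ∀ (ω : Fin K → ℝ) (I : ℝ), (∀ a, 0 ≤ ω a) →
      PsiZero M ω I (fun _ => 0) → ω = ωstar ∧ I = Istar) :
    distFn M ωstar Istar 0 = 0 ∧
    (∀ r s : ℝ, 0 ≤ r → r ≤ s → distFn M ωstar Istar r ≤ distFn M ωstar Istar s) ∧
    Filter.Tendsto (distFn M ωstar Istar) (nhdsWithin 0 (Set.Ioi 0)) (nhds 0) := by
  have hsol : M.approxSol 0 = {(ωstar, Istar)} := by
    refine Set.eq_singleton_iff_unique_mem.2
      ⟨M.mem_approxSol_zero_iff.2 ⟨hstar_nonneg, hstar⟩, fun z hz => ?_⟩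
    obtain ⟨hω, hΨ⟩ := M.mem_approxSol_zero_iff.1 hz
    exact Prod.ext_iff.2 (hstar_uniq z.1 z.2 hω hΨ)
  simp only [funext (M.distFn_eq_outerRadius ωstar Istar)]
  refine ⟨?_, fun r s _ hrs => ?_, ?_⟩
  · rw [hsol, outerRadius_singleton]
  · exact outerRadius_mono (M.isBounded_approxSol s) (M.approxSol_mono hrs)
  · refine tendsto_outerRadius fun ε hε => Filter.Eventually.filter_mono nhdsWithin_le_nhds ?_
    simpa only [hsol, Metric.thickening_singleton] using M.eventually_approxSol_subset_thickening hε
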